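/- arXiv:1003.1697 — 2 statements merged into one kernel-verified Lean document; each statement's English description precedes it below -/
import Mathlib

section
/- Let Ω be a domain in ℝⁿ, let Q = Q(a,r) be a cube contained in Ω and let t ≥ 1. Assume x ∈ (tQ) ∩ Ω and x is a Q-visible point of Ω. Let F ∈ L¹_p(Ω) be a continuous function and let n < q ≤ p < ∞. Then (|F(x) − F(a)|/diam Q)^q ≤ C·|Q|^{−1}·∫_{(γQ) ∩ Ω} ‖∇F(z)‖^q dz, where γ = γ(n,q,t) and C = C(n,q,t) are constants depending only on n, q and t. -/
/-!
Visibility and convexity put the convex hull `K` of `x` and the cube `Q` inside `Ω`. For a smooth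
`G`, integrating `∇G` along the segments `[x, y]` and averaging over `y ∈ Q` gives
`|G x - G_Q| ≤ (t + 1) r ∫₀¹ (mean over y ∈ Q of ‖∇G (x + s (y - x))‖) ds`. By Jensen and the
change of variables `z = x + s (y - x)`, whose Jacobian is `s ^ n`, the integrand is at most
`s ^ (-n/q) (|Q|⁻¹ ∫_K ‖∇G‖ ^ q) ^ (1/q)`, and `s ^ (-n/q)` is integrable on `(0, 1]` because `n < q`
(`lintegral_cube_enorm_sub_le`). The same bound holds at `a`, and the triangle inequality yields the
claim for `G` (`enorm_sub_le_of_contDiff`).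

For a general `F`, `G` is a mollification of `F`. On the compact set `K` its gradient is the
mollification of the weak gradient `g` (`fderiv_conv_apply`), so Young's inequality bounds
`∫_K ‖∇G‖ ^ q` by `n ^ q ∫ ‖g‖ ^ q` over a neighbourhood of `K` of width at most `r`, which lies in
`Ω ∩ (t + 1) Q` (`exists_smooth_approx`). This bound is uniform in the mollification scale, hence
convergence of the gradients is not needed: continuity of `F` at `x` and `a` suffices.
-/


open MeasureTheory Set Filter ENNReal NNReal

noncomputable section

/-- `ℝⁿ` equipped with the uniform norm `‖x‖ = max_i |x i|`. -/
abbrev Eu (n : ℕ) : Type := Fin n → ℝ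

variable {n : ℕ}

/-- The closed cube `Q(x,r)` with center `x` and `diam Q = 2r`
(the closed ball of radius `r` in the uniform norm). -/
def cube (x : Eu n) (r : ℝ) : Set (Eu n) := Metric.closedBall x r

/-- `dist(z, ∂Ω)`, the distance from `z` to the boundary of `Ω`. -/
def bdist (Ω : Set (Eu n)) (z : Eu n) : ℝ := Metric.infDist z (frontier Ω)

/-- The distance between two sets. -/
def setDistS (A B : Set (Eu n)) : ℝ := sInf {d : ℝ | ∃ a ∈ A, ∃ b ∈ B, d = dist a b}

/-- The line integral `∫_{[x,y]} ρ(z) ds(z)` of `ρ` over the segment `[x,y]`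
with respect to arc length. -/
def segInt (ρ : Eu n → ℝ) (x y : Eu n) : ℝ :=
  ∫ t in (0:ℝ)..1, ρ (x + t • (y - x)) * ‖y - x‖

/-- The set of subhyperbolic lengths `∫_γ dist(z,∂Ω)^{α-1} ds(z)` of rectifiable curves in `Ω`
joining `x` to `y`; rectifiable curves are encoded by their arc-length parametrizations,
i.e. `1`-Lipschitz maps `γ : [0,L] → Ω`. -/
def subLenSet (Ω : Set (Eu n)) (α : ℝ) (x y : Eu n) : Set ℝ :=
  {d : ℝ | ∃ (L : ℝ) (γ : ℝ → Eu n), 0 ≤ L ∧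
    LipschitzOnWith 1 γ (Icc 0 L) ∧ γ 0 = x ∧ γ L = y ∧
    (∀ s ∈ Icc (0:ℝ) L, γ s ∈ Ω) ∧
    IntervalIntegrable (fun s => bdist Ω (γ s) ^ (α - 1)) volume 0 L ∧
    d = ∫ s in (0:ℝ)..L, bdist Ω (γ s) ^ (α - 1)}

/-- The subhyperbolic metric `d_{α,Ω}(x,y)`. -/
def dSub (Ω : Set (Eu n)) (α : ℝ) (x y : Eu n) : ℝ := sInf (subLenSet Ω α x y)

/-- The metric `d̃_{α,Ω}(x,y) = d_{α,Ω}(x,y) + ‖x-y‖^α`. -/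
def dTil (Ω : Set (Eu n)) (α : ℝ) (x y : Eu n) : ℝ := dSub Ω α x y + ‖x - y‖ ^ α

/-- The half-open segment `(x,a]`. -/
def segOC (x a : Eu n) : Set (Eu n) := {z | ∃ t ∈ Set.Ioc (0:ℝ) 1, z = x + t • (a - x)}

/-- `x` is `Q`-visible in `Ω`: for each `y ∈ Q` the half-open segment `(x,y]` lies in `Ω`. -/
def QVisible (Ω Q : Set (Eu n)) (x : Eu n) : Prop :=
  ∀ y ∈ Q, ∀ t ∈ Set.Ioc (0:ℝ) 1, x + t • (y - x) ∈ Ω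

/-- `O_ε(∂Ω)`, the ε-neighborhood of `∂Ω` in `Ω`. -/
def Oeps (Ω : Set (Eu n)) (ε : ℝ) : Set (Eu n) := {x ∈ Ω | bdist Ω x < ε}

/-- `g` is the (first-order distributional) weak gradient of `F` on the open set `Ω`. -/
def HasWeakGradOn (F : Eu n → ℝ) (g : Eu n → Eu n) (Ω : Set (Eu n)) : Prop :=
  LocallyIntegrableOn F Ω volume ∧ LocallyIntegrableOn g Ω volume ∧
  ∀ φ : Eu n → ℝ, ContDiff ℝ (⊤ : ℕ∞) φ → HasCompactSupport φ → tsupport φ ⊆ Ω →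
    ∀ i : Fin n, ∫ x in Ω, F x * fderiv ℝ φ x (Pi.single i 1) =
      - ∫ x in Ω, g x i * φ x

/-- `F` is the continuous representative of an element of the homogeneous Sobolev space
`L¹_p(Ω)`, with weak gradient `g` and `‖∇F‖ ∈ L_p(Ω)`. -/
def ContL1pRep (Ω : Set (Eu n)) (p : ℝ) (F : Eu n → ℝ) (g : Eu n → Eu n) : Prop :=
  ContinuousOn F Ω ∧ HasWeakGradOn F g Ω ∧ IntegrableOn (fun z => ‖g z‖ ^ p) Ω volume

/-- `F` is the continuous representative of an element of `W¹_p(Ω) = L_p(Ω) ∩ L¹_p(Ω)`. -/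
def ContW1pRep (Ω : Set (Eu n)) (p : ℝ) (F : Eu n → ℝ) (g : Eu n → Eu n) : Prop :=
  ContL1pRep Ω p F g ∧ IntegrableOn (fun z => |F z| ^ p) Ω volume

/-- The norm `‖F‖_{W¹_p(Ω)} = ‖F‖_{L_p(Ω)} + ‖∇F‖_{L_p(Ω)}`. -/
def W1pNorm (Ω : Set (Eu n)) (p : ℝ) (F : Eu n → ℝ) (g : Eu n → Eu n) : ℝ :=
  (∫ z in Ω, |F z| ^ p) ^ (1/p) + (∫ z in Ω, ‖g z‖ ^ p) ^ (1/p)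


/-! ### The estimate for continuously differentiable functions -/

lemma enorm_sub_le_lintegral_fderiv {G : Eu n → ℝ} (hG : ContDiff ℝ 1 G) (x y : Eu n) :
    ‖G y - G x‖ₑ ≤ ‖y - x‖ₑ * ∫⁻ s in Ioc (0:ℝ) 1, ‖fderiv ℝ G (x + s • (y - x))‖ₑ := by
  have hc : Continuous fun s : ℝ => fderiv ℝ G (x + s • (y - x)) :=
    (hG.continuous_fderiv one_ne_zero).comp (by fun_prop)
  have hd : ∀ s : ℝ, HasDerivAt (fun s : ℝ => G (x + s • (y - x)))
      (fderiv ℝ G (x + s • (y - x)) (y - x)) s := by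
    intro s
    have h1 : HasDerivAt (fun s : ℝ => x + s • (y - x)) (y - x) s := by
      simpa using ((hasDerivAt_id s).smul_const (y - x)).const_add x
    exact ((hG.differentiable one_ne_zero _).hasFDerivAt).comp_hasDerivAt s h1
  have h := intervalIntegral.integral_eq_sub_of_hasDerivAt (a := 0) (b := 1) (fun s _ => hd s)
    ((hc.clm_apply continuous_const).intervalIntegrable _ _)
  simp only [one_smul, add_sub_cancel, zero_smul, add_zero] at h
  rw [← h, intervalIntegral.integral_of_le zero_le_one]
  refine (enorm_integral_le_lintegral_enorm _).trans ?_
  rw [← lintegral_const_mul' _ _ (by simp)]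
  refine lintegral_mono fun s => ?_
  rw [mul_comm]
  exact (fderiv ℝ G (x + s • (y - x))).le_opENorm _

/-- Jensen's inequality for `t ↦ t ^ q` on a finite measure space. -/
lemma lintegral_le_rpow_mul {α : Type*} [MeasurableSpace α] {μ : Measure α} {f : α → ℝ≥0∞}
    {q : ℝ} (hq : 1 ≤ q) (hf : AEMeasurable f μ) :
    ∫⁻ a, f a ∂μ ≤ (∫⁻ a, f a ^ q ∂μ) ^ (1 / q) * μ univ ^ (1 - 1 / q) := by
  have := eLpNorm'_le_eLpNorm'_mul_rpow_measure_univ (ε := ℝ≥0∞) zero_lt_one hq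
    hf.aestronglyMeasurable
  simpa [eLpNorm'] using this

/-- The homothety of centre `x` and ratio `s` has Jacobian `s ^ n`. -/
lemma lintegral_homothety_le {f : Eu n → ℝ≥0∞} (hf : Measurable f) {A K : Set (Eu n)}
    (hA : MeasurableSet A) (hK : MeasurableSet K) {x : Eu n} {s : ℝ} (hs : 0 < s)
    (hAK : ∀ y ∈ A, x + s • (y - x) ∈ K) :
    ∫⁻ y in A, f (x + s • (y - x)) ≤ ENNReal.ofReal ((s ^ n)⁻¹) * ∫⁻ z in K, f z := by
  have hfK : Measurable (K.indicator f) := hf.indicator hK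
  calc ∫⁻ y in A, f (x + s • (y - x))
      ≤ ∫⁻ y, K.indicator f (x + s • (y - x)) := by
        rw [← lintegral_indicator hA]
        refine lintegral_mono fun y => ?_
        by_cases hy : y ∈ A
        · simp [hy, hAK y hy]
        · simp [hy]
    _ = ∫⁻ y, K.indicator f (x + s • y) :=
        lintegral_sub_right_eq_self (fun y => K.indicator f (x + s • y)) x
    _ = ∫⁻ z, K.indicator f (x + z) ∂(Measure.map (s • ·) volume) := by
        rw [lintegral_map (by fun_prop) (by fun_prop)]
    _ = ENNReal.ofReal ((s ^ n)⁻¹) * ∫⁻ z in K, f z := by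
        rw [Measure.map_addHaar_smul _ hs.ne', lintegral_smul_measure,
          lintegral_add_left_eq_self (fun z => K.indicator f z), lintegral_indicator hK]
        simp [abs_of_pos (pow_pos hs n)]

lemma lintegral_rpow_neg {b : ℝ} (hb : b < 1) :
    ∫⁻ s in Ioc (0:ℝ) 1, ENNReal.ofReal (s ^ (-b)) = ENNReal.ofReal (1 / (1 - b)) := by
  have hi : IntervalIntegrable (fun s : ℝ => s ^ (-b)) volume 0 1 :=
    intervalIntegral.intervalIntegrable_rpow' (by linarith)
  rw [← ofReal_integral_eq_lintegral_ofReal ((intervalIntegrable_iff_integrableOn_Ioc_of_le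
      zero_le_one).1 hi), ← intervalIntegral.integral_of_le zero_le_one,
    integral_rpow (Or.inl (by linarith))]
  · rw [Real.zero_rpow (by linarith), Real.one_rpow]
    ring_nf
  · filter_upwards [ae_restrict_mem measurableSet_Ioc] with s hs
    exact Real.rpow_nonneg hs.1.le _

/-- Integrating the fundamental theorem of calculus on the segments `[x, y]` over `y ∈ Q`,
applying Jensen on each homothetic copy of `Q`, and undoing the homothety of ratio `s` leaves the
factor `s ^ (-n/q)`, which is integrable at `0` because `n < q`. -/
lemma lintegral_cube_enorm_sub_le {G : Eu n → ℝ} (hG : ContDiff ℝ 1 G) {q t r : ℝ}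
    (hq : (n:ℝ) < q) (hq1 : 1 ≤ q) {x a : Eu n} (hx : x ∈ cube a (t * r)) {K : Set (Eu n)}
    (hKm : MeasurableSet K)
    (hK : ∀ y ∈ cube a r, ∀ s ∈ Ioc (0:ℝ) 1, x + s • (y - x) ∈ K) :
    ∫⁻ y in cube a r, ‖G y - G x‖ₑ ≤ ENNReal.ofReal ((t + 1) * r) *
      (ENNReal.ofReal (1 / (1 - n / q)) * ((∫⁻ z in K, ‖fderiv ℝ G z‖ₑ ^ q) ^ (1 / q) *
        volume (cube a r) ^ (1 - 1 / q))) := by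
  have hq0 : 0 < q := by linarith
  have hc : Continuous (fderiv ℝ G) := hG.continuous_fderiv one_ne_zero
  have hQm : MeasurableSet (cube a r) := Metric.isClosed_closedBall.measurableSet
  set I := ∫⁻ z in K, ‖fderiv ℝ G z‖ₑ ^ q
  calc ∫⁻ y in cube a r, ‖G y - G x‖ₑ
      ≤ ∫⁻ y in cube a r, ENNReal.ofReal ((t + 1) * r) *
          ∫⁻ s in Ioc (0:ℝ) 1, ‖fderiv ℝ G (x + s • (y - x))‖ₑ := by
        refine setLIntegral_mono' hQm fun y hy => ?_
        refine (enorm_sub_le_lintegral_fderiv hG x y).trans ?_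
        gcongr
        rw [← ofReal_norm]
        refine ENNReal.ofReal_le_ofReal ?_
        rw [← dist_eq_norm]
        have h1 : dist y a ≤ r := hy
        have h2 : dist x a ≤ t * r := hx
        linarith [dist_triangle_right y x a]
    _ = ENNReal.ofReal ((t + 1) * r) * ∫⁻ s in Ioc (0:ℝ) 1, ∫⁻ y in cube a r,
          ‖fderiv ℝ G (x + s • (y - x))‖ₑ := by
        rw [lintegral_const_mul' _ _ (by simp), lintegral_lintegral_swap]
        refine Continuous.aemeasurable ?_
        have : Continuous fun p : Eu n × ℝ => fderiv ℝ G (x + p.2 • (p.1 - x)) :=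
          hc.comp (by fun_prop)
        exact this.enorm
    _ ≤ ENNReal.ofReal ((t + 1) * r) * ∫⁻ s in Ioc (0:ℝ) 1,
          ENNReal.ofReal (s ^ (-((n:ℝ) / q))) * (I ^ (1 / q) * volume (cube a r) ^ (1 - 1 / q)) := by
        refine mul_le_mul' le_rfl ?_
        refine setLIntegral_mono' measurableSet_Ioc fun s hs => ?_
        have hcs : Continuous fun y : Eu n => fderiv ℝ G (x + s • (y - x)) :=
          hc.comp (by fun_prop)
        refine (lintegral_le_rpow_mul hq1 hcs.enorm.aemeasurable).trans ?_
        rw [Measure.restrict_apply_univ, ← mul_assoc]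
        gcongr ?_ * _
        calc _ ≤ (ENNReal.ofReal ((s ^ n)⁻¹) * I) ^ (1 / q) := by
              gcongr
              exact lintegral_homothety_le (f := fun z => ‖fderiv ℝ G z‖ₑ ^ q)
                (hc.enorm.measurable.pow_const q) hQm hKm hs.1 (fun y hy => hK y hy s hs)
          _ = _ := by
              rw [ENNReal.mul_rpow_of_nonneg _ _ (by positivity),
                ENNReal.ofReal_rpow_of_nonneg (by have := hs.1; positivity) (by positivity),
                ← Real.rpow_natCast, ← Real.rpow_neg hs.1.le, ← Real.rpow_mul hs.1.le]
              congr 3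
              ring
    _ = _ := by
        rw [lintegral_mul_const _ (by fun_prop), lintegral_rpow_neg]
        rwa [div_lt_one hq0]

/-- Comparing both values with the mean over `Q`. -/
lemma enorm_sub_le_of_contDiff {G : Eu n → ℝ} (hG : ContDiff ℝ 1 G) {q t r : ℝ}
    (hq : (n:ℝ) < q) (hq1 : 1 ≤ q) (ht : 1 ≤ t) (hr : 0 < r) {x a : Eu n}
    (hx : x ∈ cube a (t * r)) {K : Set (Eu n)}
    (hKm : MeasurableSet K) (haK : ∀ y ∈ cube a r, ∀ s ∈ Ioc (0:ℝ) 1, a + s • (y - a) ∈ K)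
    (hK : ∀ y ∈ cube a r, ∀ s ∈ Ioc (0:ℝ) 1, x + s • (y - x) ∈ K) :
    ‖G x - G a‖ₑ ≤ ENNReal.ofReal (2 * ((t + 1) * r) / (1 - n / q)) *
      ((volume (cube a r))⁻¹ * ∫⁻ z in K, ‖fderiv ℝ G z‖ₑ ^ q) ^ (1 / q) := by
  have hq0 : 0 < q := by linarith
  have hnq : 0 < 1 - n / q := by rw [sub_pos, div_lt_one hq0]; exact hq
  have hQm : MeasurableSet (cube a r) := Metric.isClosed_closedBall.measurableSet
  have hV0 : volume (cube a r) ≠ 0 := (Metric.measure_closedBall_pos _ _ hr).ne'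
  have hVt : volume (cube a r) ≠ ∞ := measure_closedBall_lt_top.ne
  have haQ : a ∈ cube a (t * r) := Metric.mem_closedBall_self (by positivity)
  have h1 := lintegral_cube_enorm_sub_le hG hq hq1 hx hKm hK
  have h2 := lintegral_cube_enorm_sub_le hG hq hq1 haQ hKm haK
  set V := volume (cube a r)
  set I := ∫⁻ z in K, ‖fderiv ℝ G z‖ₑ ^ q
  have h3 : ‖G x - G a‖ₑ * V ≤ (∫⁻ y in cube a r, ‖G y - G x‖ₑ) +
      ∫⁻ y in cube a r, ‖G y - G a‖ₑ := by
    have hm : Measurable fun y => ‖G y - G x‖ₑ :=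
      (hG.continuous.sub continuous_const).enorm.measurable
    rw [← lintegral_add_left hm,
      ← setLIntegral_const]
    refine lintegral_mono fun y => ?_
    rw [← edist_eq_enorm_sub, ← edist_eq_enorm_sub, ← edist_eq_enorm_sub, edist_comm (G y) (G x)]
    exact edist_triangle _ _ _
  have h4 : ‖G x - G a‖ₑ ≤ _ := (ENNReal.le_div_iff_mul_le (Or.inl hV0) (Or.inl hVt)).2
    (h3.trans (add_le_add h1 h2))
  refine h4.trans_eq ?_
  rw [← two_mul, ENNReal.mul_rpow_of_nonneg _ _ (by positivity), ENNReal.inv_rpow,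
    ENNReal.rpow_sub _ _ hV0 hVt, ENNReal.rpow_one, mul_div_assoc (2:ℝ), div_eq_mul_one_div (_ * r),
    ENNReal.ofReal_mul (p := 2) (by positivity), ENNReal.ofReal_mul (p := (t + 1) * r) (by positivity)]
  generalize ENNReal.ofReal ((t + 1) * r) = c
  simp only [div_eq_mul_inv, ENNReal.ofReal_ofNat]
  calc _ = 2 * (c * ENNReal.ofReal (1 * (1 - ↑n * q⁻¹)⁻¹)) *
        ((V ^ (1 * q⁻¹))⁻¹ * I ^ (1 * q⁻¹)) * (V * V⁻¹) := by ring
    _ = _ := by rw [ENNReal.mul_inv_cancel hV0 hVt, mul_one]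

/-! ### Convolutions and weak gradients -/

/-- Young's inequality `‖W ⋆ k‖_q ≤ ‖W‖₁ ‖k‖_q` for a kernel of mass one. -/
lemma lintegral_conv_rpow_le {W : Eu n → ℝ≥0∞} (hW : Measurable W) (hW1 : ∫⁻ y, W y = 1)
    {k : Eu n → ℝ≥0∞} {A : Set (Eu n)} (hk : AEMeasurable k (volume.restrict A)) {q : ℝ}
    (hq : 1 ≤ q) (K : Set (Eu n)) :
    ∫⁻ z in K, (∫⁻ y in A, W (z - y) * k y) ^ q ≤ ∫⁻ y in A, k y ^ q := by
  have hq0 : 0 < q := by linarith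
  have hpt : ∀ z, (∫⁻ y in A, W (z - y) * k y) ^ q ≤ ∫⁻ y in A, W (z - y) * k y ^ q := by
    intro z
    have hWz : Measurable fun y => W (z - y) := by fun_prop
    set ν := (volume.restrict A).withDensity fun y => W (z - y)
    have hν1 : ν univ ≤ 1 := by
      rw [withDensity_apply _ MeasurableSet.univ, Measure.restrict_univ]
      refine (lintegral_mono' Measure.restrict_le_self le_rfl).trans ?_
      rw [lintegral_sub_left_eq_self (fun y => W y) z, hW1]
    have hkν : AEMeasurable k ν := hk.mono_ac (withDensity_absolutelyContinuous _ _)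
    have h1 : ∫⁻ y, k y ∂ν = ∫⁻ y in A, W (z - y) * k y := by
      rw [lintegral_withDensity_eq_lintegral_mul₀ hWz.aemeasurable hk]; rfl
    have h2 : ∫⁻ y, k y ^ q ∂ν = ∫⁻ y in A, W (z - y) * k y ^ q := by
      rw [lintegral_withDensity_eq_lintegral_mul₀ hWz.aemeasurable (hk.pow_const q)]; rfl
    rw [← h1, ← h2]
    calc (∫⁻ y, k y ∂ν) ^ q ≤ ((∫⁻ y, k y ^ q ∂ν) ^ (1 / q) * ν univ ^ (1 - 1 / q)) ^ q := by
          gcongr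
          exact lintegral_le_rpow_mul hq hkν
      _ ≤ ((∫⁻ y, k y ^ q ∂ν) ^ (1 / q) * 1) ^ q := by
          gcongr
          refine ENNReal.rpow_le_one hν1 ?_
          rw [sub_nonneg, div_le_one hq0]
          exact hq
      _ = _ := by
          rw [mul_one, ← ENNReal.rpow_mul, one_div_mul_cancel hq0.ne', ENNReal.rpow_one]
  calc _ ≤ ∫⁻ z, ∫⁻ y in A, W (z - y) * k y ^ q :=
        (lintegral_mono hpt).trans (lintegral_mono' Measure.restrict_le_self le_rfl)
    _ = ∫⁻ y in A, ∫⁻ z, W (z - y) * k y ^ q := by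
        refine lintegral_lintegral_swap ?_
        refine AEMeasurable.mul (by fun_prop) ?_
        exact (hk.pow_const q).comp_snd
    _ = _ := by
        refine lintegral_congr fun y => ?_
        rw [lintegral_mul_const _ (by fun_prop), lintegral_sub_right_eq_self (fun z => W z) y, hW1,
          one_mul]

/-- The operator norm dual to the uniform norm is the `ℓ¹` norm of the partial derivatives. -/
lemma enorm_clm_le (L : Eu n →L[ℝ] ℝ) : ‖L‖ₑ ≤ ∑ i, ‖L (Pi.single i 1)‖ₑ := by
  have h : ‖L‖ ≤ ∑ i, ‖L (Pi.single i 1)‖ := by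
    refine L.opNorm_le_bound (Finset.sum_nonneg fun i _ => norm_nonneg _) fun v => ?_
    have hv : L v = ∑ i, v i * L (Pi.single i 1) := by
      conv_lhs => rw [← Finset.univ_sum_single v, map_sum]
      refine Finset.sum_congr rfl fun i _ => ?_
      rw [← smul_eq_mul, ← map_smul, ← Pi.single_smul, smul_eq_mul, mul_one]
    rw [hv, Finset.sum_mul]
    refine (norm_sum_le _ _).trans (Finset.sum_le_sum fun i _ => ?_)
    rw [norm_mul, mul_comm]
    gcongr
    exact norm_le_pi_norm v i
  rw [← ofReal_norm]
  refine (ENNReal.ofReal_le_ofReal h).trans ?_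
  rw [ENNReal.ofReal_sum_of_nonneg fun i _ => norm_nonneg _]
  simp only [ofReal_norm, le_refl]

open scoped Convolution in
/-- The partial derivatives of the mollification of `F` are the mollifications of the components of
`g`: the derivative falls on the kernel, and `y ↦ φ (z - y)` is a test function in the definition
of the weak gradient. Cutting `F` off to `A` makes it globally integrable, and does not change the
mollification near points whose `rOut`-neighbourhood lies in `A`. -/
lemma fderiv_conv_apply {Ω A : Set (Eu n)} (hΩ : IsOpen Ω) (hA : IsCompact A) (hAΩ : A ⊆ Ω)
    {F : Eu n → ℝ} {g : Eu n → Eu n} (hF : ContinuousOn F Ω) (hg : HasWeakGradOn F g Ω)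
    (φ : ContDiffBump (0 : Eu n)) {z : Eu n} (hz : Metric.closedBall z φ.rOut ⊆ A) (i : Fin n) :
    fderiv ℝ (φ.normed volume ⋆[ContinuousLinearMap.lsmul ℝ ℝ, volume] A.indicator F) z
      (Pi.single i 1) = ∫ y in Ω, g y i * φ.normed volume (z - y) := by
  set w : Eu n → ℝ := φ.normed volume
  have hAm : MeasurableSet A := hA.isClosed.measurableSet
  have hFi : Integrable (A.indicator F) :=
    (integrable_indicator_iff hAm).2 ((hF.mono hAΩ).integrableOn_compact hA)
  have hw : ContDiff ℝ (⊤ : ℕ∞) w := φ.contDiff_normed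
  have hw1 : ContDiff ℝ 1 w := φ.contDiff_normed (n := 1)
  have hwc : HasCompactSupport w := φ.hasCompactSupport_normed
  have hts : tsupport w = Metric.closedBall 0 φ.rOut := φ.tsupport_normed_eq
  have hd := (hwc.hasFDerivAt_convolution_left (ContinuousLinearMap.lsmul ℝ ℝ) hw1
    hFi.locallyIntegrable z).fderiv
  have hex : ConvolutionExistsAt (fderiv ℝ w) (A.indicator F) z
      ((ContinuousLinearMap.lsmul ℝ ℝ).precompL (Eu n)) volume :=
    (hwc.fderiv ℝ).convolutionExists_left _ (hw1.continuous_fderiv one_ne_zero)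
      hFi.locallyIntegrable z
  have hfd : ∀ y, fderiv ℝ (fun y => w (z - y)) y (Pi.single i 1) =
      - fderiv ℝ w (z - y) (Pi.single i 1) := by
    intro y
    have h := ((hw1.differentiable one_ne_zero (z - y)).hasFDerivAt.comp y
      ((hasFDerivAt_id y).const_sub z)).fderiv
    rw [show fderiv ℝ (fun y => w (z - y)) y = _ from h]
    simp
  have hts2 : tsupport (fun y => w (z - y)) ⊆ Metric.closedBall z φ.rOut := by
    refine closure_minimal (fun y hy => ?_) Metric.isClosed_closedBall
    have : z - y ∈ tsupport w := subset_tsupport _ hy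
    rw [hts] at this
    simpa [dist_comm, dist_eq_norm] using this
  have hweak := hg.2.2 (fun y => w (z - y)) (hw.comp (contDiff_const.sub contDiff_id))
    (HasCompactSupport.intro (isCompact_closedBall z φ.rOut)
      fun y hy => by_contra fun h => hy (hts2 (subset_tsupport _ h))) (hts2.trans (hz.trans hAΩ)) i
  rw [hd, convolution_def, ContinuousLinearMap.integral_apply hex, ← neg_eq_iff_eq_neg.2 hweak,
    ← integral_neg, ← integral_indicator hΩ.measurableSet, ← integral_sub_left_eq_self _ volume z]
  refine integral_congr_ae (Eventually.of_forall fun y => ?_)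
  simp only [ContinuousLinearMap.precompL_apply, _root_.sub_sub_cancel, ContinuousLinearMap.lsmul_apply,
    smul_eq_mul]
  by_cases hy : y ∈ A
  · rw [indicator_of_mem hy, indicator_of_mem (hAΩ hy), hfd]
    ring
  · have h0 : fderiv ℝ (fun y => w (z - y)) y = 0 := by
      refine image_eq_zero_of_notMem_tsupport fun h => hy (hz (hts2 ?_))
      exact tsupport_fderiv_subset ℝ h
    have h0' : fderiv ℝ w (z - y) (Pi.single i 1) = 0 := by
      rw [← neg_eq_zero, ← hfd, h0]
      rfl
    rw [h0', zero_mul]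
    by_cases hyΩ : y ∈ Ω
    · rw [indicator_of_mem hyΩ, h0]
      simp
    · rw [indicator_of_notMem hyΩ]

/-! ### Mollification and passage to the limit -/

open scoped Convolution in
/-- Mollification at a scale at most `δ`: the mollified function is as close to `F` as wanted at two
given points of `K`, and the `L_q` norm of its gradient on `K` is controlled by that of `g` on the
`δ`-neighbourhood of `K`, uniformly in the scale. -/
lemma exists_smooth_approx {Ω K : Set (Eu n)} (hΩ : IsOpen Ω) (hK : IsCompact K) {δ : ℝ}
    (hδ : 0 < δ) (hKΩ : Metric.cthickening δ K ⊆ Ω) {F : Eu n → ℝ} {g : Eu n → Eu n}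
    (hF : ContinuousOn F Ω) (hg : HasWeakGradOn F g Ω) {q : ℝ} (hq : 1 ≤ q) {x a : Eu n}
    (hx : x ∈ K) (ha : a ∈ K) {η : ℝ} (hη : 0 < η) :
    ∃ G : Eu n → ℝ, ContDiff ℝ 1 G ∧ dist (G x) (F x) ≤ η ∧ dist (G a) (F a) ≤ η ∧
      ∫⁻ z in K, ‖fderiv ℝ G z‖ₑ ^ q ≤
        (n:ℝ≥0∞) ^ q * ∫⁻ z in Metric.cthickening δ K, ‖g z‖ₑ ^ q := by
  have hq0 : 0 < q := by linarith
  set A := Metric.cthickening δ K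
  have hA : IsCompact A := hK.cthickening
  have hAm : MeasurableSet A := hA.isClosed.measurableSet
  have hKA : K ⊆ A := Metric.self_subset_cthickening K
  have hFi : Integrable (A.indicator F) :=
    (integrable_indicator_iff hAm).2 ((hF.mono hKΩ).integrableOn_compact hA)
  have hcont : ∀ y ∈ K, ∃ ρ > 0, ∀ u ∈ Metric.ball y ρ, dist (F u) (F y) ≤ η := by
    intro y hy
    obtain ⟨ρ, hρ, h⟩ := Metric.continuousAt_iff.1
      (hF.continuousAt (hΩ.mem_nhds (hKΩ (hKA hy)))) η hη
    exact ⟨ρ, hρ, fun u hu => (h hu).le⟩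
  obtain ⟨ρ₁, hρ₁, h₁⟩ := hcont x hx
  obtain ⟨ρ₂, hρ₂, h₂⟩ := hcont a ha
  have hρ : 0 < min δ (min ρ₁ ρ₂) := lt_min hδ (lt_min hρ₁ hρ₂)
  set ρ := min δ (min ρ₁ ρ₂)
  let φ : ContDiffBump (0 : Eu n) := ⟨ρ / 2, ρ, by positivity, by linarith⟩
  have hρδ : ρ ≤ δ := min_le_left _ _
  have hball : ∀ y ∈ K, Metric.closedBall y φ.rOut ⊆ A := fun y hy =>
    (Metric.closedBall_subset_closedBall hρδ).trans (Metric.closedBall_subset_cthickening hy δ)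
  have happrox : ∀ y ∈ K, (∀ u ∈ Metric.ball y ρ, dist (F u) (F y) ≤ η) →
      dist ((φ.normed volume ⋆[ContinuousLinearMap.lsmul ℝ ℝ, volume] A.indicator F) y) (F y)
        ≤ η := by
    intro y hy h
    rw [← indicator_of_mem (hKA hy) F]
    refine φ.dist_normed_convolution_le hFi.aestronglyMeasurable fun u hu => ?_
    rw [indicator_of_mem (hKA hy), indicator_of_mem (hball y hy (Metric.ball_subset_closedBall hu))]
    exact h u hu
  refine ⟨φ.normed volume ⋆[ContinuousLinearMap.lsmul ℝ ℝ, volume] A.indicator F,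
    φ.hasCompactSupport_normed.contDiff_convolution_left _ (φ.contDiff_normed (n := 1))
      hFi.locallyIntegrable,
    happrox x hx fun u hu => h₁ u (Metric.ball_subset_ball
      ((min_le_right _ _).trans (min_le_left _ _)) hu),
    happrox a ha fun u hu => h₂ u (Metric.ball_subset_ball
      ((min_le_right _ _).trans (min_le_right _ _)) hu), ?_⟩
  set w : Eu n → ℝ := φ.normed volume
  set W : Eu n → ℝ≥0∞ := fun y => ‖w y‖ₑ
  have hwcont : Continuous w := φ.continuous_normed
  have hW : Measurable W := hwcont.enorm.measurable
  have hW1 : ∫⁻ y, W y = 1 := by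
    have h := ofReal_integral_eq_lintegral_ofReal (φ.integrable_normed (μ := volume))
      (Eventually.of_forall φ.nonneg_normed)
    rw [φ.integral_normed, ENNReal.ofReal_one] at h
    rw [h]
    refine lintegral_congr fun y => ?_
    exact Real.enorm_of_nonneg (φ.nonneg_normed y)
  have hgm : AEMeasurable (fun y => ‖g y‖ₑ) (volume.restrict A) :=
    (hg.2.1.aestronglyMeasurable.mono_measure (Measure.restrict_mono hKΩ le_rfl)).enorm
  have hpt : ∀ z ∈ K, ‖fderiv ℝ
      (w ⋆[ContinuousLinearMap.lsmul ℝ ℝ, volume] A.indicator F) z‖ₑ ≤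
      n * ∫⁻ y in A, W (z - y) * ‖g y‖ₑ := by
    intro z hz
    refine (enorm_clm_le _).trans ?_
    have hi : ∀ i : Fin n, ‖fderiv ℝ
        (w ⋆[ContinuousLinearMap.lsmul ℝ ℝ, volume] A.indicator F) z (Pi.single i 1)‖ₑ ≤
        ∫⁻ y in A, W (z - y) * ‖g y‖ₑ := by
      intro i
      rw [fderiv_conv_apply hΩ hA hKΩ hF hg φ (hball z hz) i]
      refine (enorm_integral_le_lintegral_enorm _).trans ?_
      rw [← lintegral_indicator hAm, ← lintegral_indicator hΩ.measurableSet]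
      refine lintegral_mono fun y => ?_
      by_cases hy : y ∈ A
      · rw [indicator_of_mem hy, indicator_of_mem (hKΩ hy), enorm_mul, mul_comm]
        gcongr
        rw [← ofReal_norm, ← ofReal_norm]
        exact ENNReal.ofReal_le_ofReal (norm_le_pi_norm (g y) i)
      · have h0 : w (z - y) = 0 := by
          by_contra h
          have : z - y ∈ Function.support w := h
          rw [φ.support_normed_eq] at this
          refine hy (hball z hz ?_)
          have h3 := Metric.ball_subset_closedBall this
          simpa [dist_comm, dist_eq_norm] using h3
        by_cases hyΩ : y ∈ Ω
        · rw [indicator_of_mem hyΩ]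
          change ‖g y i * w (z - y)‖ₑ ≤ _
          simp [h0]
        · rw [indicator_of_notMem hyΩ]
          exact bot_le
    refine (Finset.sum_le_sum fun i _ => hi i).trans ?_
    simp
  calc _ ≤ ∫⁻ z in K, (n:ℝ≥0∞) ^ q * (∫⁻ y in A, W (z - y) * ‖g y‖ₑ) ^ q := by
        refine setLIntegral_mono' hK.isClosed.measurableSet fun z hz => ?_
        rw [← ENNReal.mul_rpow_of_nonneg _ _ hq0.le]
        gcongr
        exact hpt z hz
    _ ≤ _ := by
        rw [lintegral_const_mul' _ _ (ENNReal.rpow_ne_top_of_nonneg hq0.le (by simp))]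
        refine mul_le_mul' le_rfl ?_
        exact lintegral_conv_rpow_le hW hW1 hgm hq K

/-- The estimate for smooth functions passes to the limit because the bound supplied by
`exists_smooth_approx` does not depend on the quality of the approximation. -/
lemma enorm_sub_le_of_weakGrad {Ω K : Set (Eu n)} (hΩ : IsOpen Ω) (hK : IsCompact K) {δ : ℝ}
    (hδ : 0 < δ) (hKΩ : Metric.cthickening δ K ⊆ Ω) {F : Eu n → ℝ} {g : Eu n → Eu n}
    (hF : ContinuousOn F Ω) (hg : HasWeakGradOn F g Ω) {q t r : ℝ}
    (hq : (n:ℝ) < q) (hq1 : 1 ≤ q) (ht : 1 ≤ t) (hr : 0 < r) {x a : Eu n}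
    (hx : x ∈ cube a (t * r)) (hxK : x ∈ K) (haK : a ∈ K)
    (hseg : ∀ y ∈ cube a r, ∀ s ∈ Ioc (0:ℝ) 1, a + s • (y - a) ∈ K)
    (hsegx : ∀ y ∈ cube a r, ∀ s ∈ Ioc (0:ℝ) 1, x + s • (y - x) ∈ K) :
    ‖F x - F a‖ₑ ≤ ENNReal.ofReal (2 * ((t + 1) * r) / (1 - n / q)) *
      ((volume (cube a r))⁻¹ * ((n:ℝ≥0∞) ^ q *
        ∫⁻ z in Metric.cthickening δ K, ‖g z‖ₑ ^ q)) ^ (1 / q) := by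
  have hq0 : 0 < q := by linarith
  refine ENNReal.le_of_forall_pos_le_add fun ε hε _ => ?_
  obtain ⟨G, hG, hGx, hGa, hGI⟩ := exists_smooth_approx hΩ hK hδ hKΩ hF hg hq1 hxK haK
    (η := (ε:ℝ) / 2) (by positivity)
  have h1 := enorm_sub_le_of_contDiff hG hq hq1 ht hr hx hK.isClosed.measurableSet hseg hsegx
  have h2 : ‖F x - F a‖ₑ ≤ ‖G x - G a‖ₑ + ε := by
    have h3 : ‖F x - F a‖ ≤ ‖G x - G a‖ + ε := by
      rw [← dist_eq_norm, ← dist_eq_norm]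
      have h4 := dist_triangle4 (F x) (G x) (G a) (F a)
      rw [dist_comm (F x) (G x)] at h4
      linarith
    rw [← ofReal_norm, ← ofReal_norm, ← ENNReal.ofReal_coe_nnreal,
      ← ENNReal.ofReal_add (norm_nonneg _) ε.coe_nonneg]
    exact ENNReal.ofReal_le_ofReal h3
  refine h2.trans ?_
  gcongr
  refine h1.trans ?_
  gcongr

/-- On a set of finite measure the `p`-integrability of `g` implies its `q`-integrability. -/
lemma integrableOn_rpow_of_le {A : Set (Eu n)} {g : Eu n → Eu n} {p q : ℝ} (hq : 0 < q)
    (hqp : q ≤ p) (hA : volume A ≠ ∞) (hg : AEStronglyMeasurable g (volume.restrict A))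
    (hgp : IntegrableOn (fun z => ‖g z‖ ^ p) A) : IntegrableOn (fun z => ‖g z‖ ^ q) A := by
  have h1 : IntegrableOn (fun _ : Eu n => (1:ℝ)) A := integrableOn_const hA
  refine (h1.add hgp).mono' (hg.norm.aemeasurable.pow_const q).aestronglyMeasurable
    (Eventually.of_forall fun z => ?_)
  rw [Real.norm_of_nonneg (by positivity)]
  simp only [Pi.add_apply]
  have hp : 0 ≤ ‖g z‖ ^ p := by positivity
  rcases le_total ‖g z‖ 1 with h | h
  · linarith [Real.rpow_le_one (norm_nonneg (g z)) h hq.le]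
  · linarith [Real.rpow_le_rpow_of_exponent_le h hqp]


/-! ### The visible point estimate -/

/-- Lemma 3.5.  Let `Ω ⊆ ℝⁿ` be a domain, `Q = Q(a,r)` a cube in `Ω`,
`t ≥ 1`, `x ∈ (tQ) ∩ Ω` a `Q`-visible point of `Ω`, `F ∈ L¹_p(Ω)` continuous and
`n < q ≤ p < ∞`.  Then `(|F(x) − F(a)| / diam Q)^q ≤ C·|Q|⁻¹·∫_{(γQ)∩Ω} ‖∇F‖^q` for
constants `γ = γ(n,q,t) > 0` and `C = C(n,q,t) > 0`. -/
theorem statement14 (n : ℕ) (hn : 0 < n) (q t : ℝ) (hq : (n:ℝ) < q) (ht : 1 ≤ t) :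
    ∃ γ C : ℝ, 0 < γ ∧ 0 < C ∧ ∀ p : ℝ, q ≤ p →
      ∀ (Ω : Set (Eu n)), IsOpen Ω → IsConnected Ω →
        ∀ (a : Eu n) (r : ℝ), 0 < r → cube a r ⊆ Ω →
          ∀ x, x ∈ cube a (t * r) ∩ Ω → QVisible Ω (cube a r) x →
            ∀ F g, ContL1pRep Ω p F g →
              (|F x - F a| / (2 * r)) ^ q ≤
                C * (volume (cube a r)).toReal⁻¹ *
                  ∫ z in cube a (γ * r) ∩ Ω, ‖g z‖ ^ q := by
  have hn1 : (1:ℝ) ≤ n := by exact_mod_cast hn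
  have hq1 : 1 ≤ q := by linarith
  have hq0 : 0 < q := by linarith
  have hnq : 0 < 1 - n / q := by rw [sub_pos, div_lt_one hq0]; exact hq
  refine ⟨t + 1, ((t + 1) / (1 - n / q)) ^ q * (n:ℝ) ^ q, by positivity, by positivity, ?_⟩
  intro p hqp Ω hΩ _ a r hr hQΩ x hx hvis F g hFg
  obtain ⟨hF, hg, hgp⟩ := hFg
  -- `K` is the convex hull of `x` and the cube, written as the union of the segments `[x, y]`.
  set K : Set (Eu n) := (fun u : ℝ × Eu n => x + u.1 • (u.2 - x)) '' (Icc (0:ℝ) 1 ×ˢ cube a r)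
  have hQc : IsCompact (cube a r) := isCompact_closedBall a r
  have hK : IsCompact K := (isCompact_Icc.prod hQc).image (by fun_prop)
  have hmemK : ∀ y ∈ cube a r, ∀ s ∈ Icc (0:ℝ) 1, x + s • (y - x) ∈ K := fun y hy s hs =>
    ⟨(s, y), ⟨hs, hy⟩, rfl⟩
  have hQK : cube a r ⊆ K := fun y hy => by
    simpa using hmemK y hy 1 ⟨zero_le_one, le_rfl⟩
  have haQ : a ∈ cube a r := Metric.mem_closedBall_self hr.le
  have hxK : x ∈ K := by simpa using hmemK a haQ 0 ⟨le_rfl, zero_le_one⟩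
  have hKΩ : K ⊆ Ω := by
    rintro _ ⟨⟨s, y⟩, ⟨hs, hy⟩, rfl⟩
    rcases hs.1.eq_or_lt with h | h
    · have h0 : s = 0 := h.symm
      simpa [h0] using hx.2
    · exact hvis y hy s ⟨h, hs.2⟩
  have hQtQ : cube a r ⊆ cube a (t * r) := Metric.closedBall_subset_closedBall (by nlinarith)
  have hKt : K ⊆ cube a (t * r) := by
    rintro _ ⟨⟨s, y⟩, ⟨hs, hy⟩, rfl⟩
    exact (convex_closedBall a (t * r)).add_smul_sub_mem hx.1 (hQtQ hy) hs
  obtain ⟨δ₀, hδ₀, hδΩ⟩ := hK.exists_cthickening_subset_open hΩ hKΩ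
  have hδ : 0 < min δ₀ r := lt_min hδ₀ hr
  have hAΩ : Metric.cthickening (min δ₀ r) K ⊆ Ω :=
    (Metric.cthickening_mono (min_le_left _ _) _).trans hδΩ
  have hAt : Metric.cthickening (min δ₀ r) K ⊆ cube a ((t + 1) * r) := by
    refine (Metric.cthickening_mono (min_le_right _ _) _).trans
      ((Metric.cthickening_subset_of_subset r hKt).trans ?_)
    rw [cube, cthickening_closedBall hr.le (by positivity)]
    exact Metric.closedBall_subset_closedBall (by linarith)
  have hsega : ∀ y ∈ cube a r, ∀ s ∈ Ioc (0:ℝ) 1, a + s • (y - a) ∈ K := fun y hy s hs =>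
    hQK ((convex_closedBall a r).add_smul_sub_mem haQ hy ⟨hs.1.le, hs.2⟩)
  have hmain := enorm_sub_le_of_weakGrad hΩ hK hδ hAΩ hF hg hq hq1 ht hr hx.1 hxK (hQK haQ)
    hsega (fun y hy s hs => hmemK y hy s ⟨hs.1.le, hs.2⟩)
  set S := cube a ((t + 1) * r) ∩ Ω
  have hSv : volume S ≠ ∞ :=
    ((measure_mono inter_subset_left).trans_lt measure_closedBall_lt_top).ne
  have hgS : IntegrableOn (fun z => ‖g z‖ ^ q) S :=
    integrableOn_rpow_of_le hq0 hqp hSv (hg.2.1.aestronglyMeasurable.mono_measure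
      (Measure.restrict_mono inter_subset_right le_rfl)) (hgp.mono_set inter_subset_right)
  have hJ : ∫⁻ z in S, ‖g z‖ₑ ^ q = ENNReal.ofReal (∫ z in S, ‖g z‖ ^ q) := by
    rw [ofReal_integral_eq_lintegral_ofReal hgS (Eventually.of_forall fun z => by positivity)]
    refine lintegral_congr fun z => ?_
    rw [← ENNReal.ofReal_rpow_of_nonneg (norm_nonneg _) hq0.le, ofReal_norm]
  set J := ∫ z in S, ‖g z‖ ^ q
  have hJ0 : 0 ≤ J := integral_nonneg fun z => by positivity
  have hV0 : volume (cube a r) ≠ 0 := (Metric.measure_closedBall_pos _ _ hr).ne'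
  have hVt : volume (cube a r) ≠ ∞ := measure_closedBall_lt_top.ne
  have hv : 0 < (volume (cube a r)).toReal := ENNReal.toReal_pos hV0 hVt
  have hVv : volume (cube a r) = ENNReal.ofReal (volume (cube a r)).toReal :=
    (ENNReal.ofReal_toReal hVt).symm
  set v := (volume (cube a r)).toReal
  have hreal : |F x - F a| ≤
      2 * ((t + 1) * r) / (1 - n / q) * (v⁻¹ * ((n:ℝ) ^ q * J)) ^ (1 / q) := by
    rw [← ENNReal.ofReal_le_ofReal_iff (by positivity), ← Real.norm_eq_abs, ofReal_norm,
      ENNReal.ofReal_mul (by positivity), ← ENNReal.ofReal_rpow_of_nonneg (by positivity)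
        (by positivity), ENNReal.ofReal_mul (p := v⁻¹) (by positivity),
      ENNReal.ofReal_mul (p := (n:ℝ) ^ q) (by positivity), ENNReal.ofReal_inv_of_pos hv, ← hVv,
      ← ENNReal.ofReal_rpow_of_nonneg (by positivity) hq0.le, ENNReal.ofReal_natCast, ← hJ]
    refine hmain.trans ?_
    gcongr
    exact (subset_inter hAt hAΩ)
  calc (|F x - F a| / (2 * r)) ^ q
      ≤ ((t + 1) / (1 - n / q) * (v⁻¹ * ((n:ℝ) ^ q * J)) ^ (1 / q)) ^ q := by
        gcongr
        rw [div_le_iff₀ (by positivity)]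
        refine hreal.trans_eq ?_
        ring
    _ = _ := by
        rw [Real.mul_rpow (by positivity) (by positivity), ← Real.rpow_mul (by positivity),
          one_div_mul_cancel hq0.ne', Real.rpow_one]
        ring
end
end

section
/- Let Ω be a domain in ℝⁿ and α ∈ (0,1]. Let Q = Q(x_Q, r_Q) be a cube contained in Ω satisfying diam Q ≤ dist(Q,∂Ω) ≤ 4·diam Q, let a_Q ∈ ∂Ω be a point of ∂Ω nearest to Q (in the Euclidean norm), and set x_i := a_Q + (1/i)(x_Q − a_Q) for i = 1,2,…. Then for every y ∈ Q the limit lim_{i→∞} d̃_{α,Ω}(y, x_i) exists and satisfies lim_{i→∞} d̃_{α,Ω}(y, x_i) ≤ C(α)·dist(y,∂Ω)^α, where C(α) depends only on α. -/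
/-!
Write `R` for the distance from `x_Q` to `a_Q`. In the uniform norm a cube is a ball, so a boundary
point nearest to the cube is also nearest to its center (`nearest_center`); hence
`dist(x_Q, ∂Ω) = R`, and `dist(z, ∂Ω)` equals the distance from `z` to `a_Q` for every `z` on the
segment from `a_Q` to `x_Q`. The piece of that segment at distances between `p` and `q` from `a_Q`
therefore has subhyperbolic length `∫_p^q s^(α-1) ds = (q^α - p^α) / α` (`radial_mem`).

Since curves can be concatenated (`subLenSet_concat`), the sequence
`i ↦ d(y, x_i) + (R / i)^α / α` is antitone for `i ≥ 1`. It is nonnegative, so it converges, and so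
does `d(y, x_i)` because `(R / i)^α → 0`. The term `‖y - x_i‖^α` converges by continuity.

For the bound, join `y` to `x_Q` by a segment in `Q`, where `dist(·, ∂Ω) ≥ 2 r_Q`, and `x_Q` to
`x_i` by the radial segment. As `2 r_Q ≤ dist(y, ∂Ω)` and `R ≤ dist(y, ∂Ω) + r_Q`, each of the three
terms is a multiple of `dist(y, ∂Ω)^α`.
-/


open MeasureTheory Set Filter ENNReal NNReal

noncomputable section

variable {n : ℕ}

/-! ### Subhyperbolic lengths and concatenation of curves -/

theorem subLenSet_nonneg {Ω : Set (Eu n)} {α : ℝ} {x y : Eu n} {d : ℝ}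
    (h : d ∈ subLenSet Ω α x y) : 0 ≤ d := by
  obtain ⟨L, γ, hL, -, -, -, -, -, rfl⟩ := h
  exact intervalIntegral.integral_nonneg hL fun s _ =>
    Real.rpow_nonneg Metric.infDist_nonneg _

theorem dSub_le_of_mem {Ω : Set (Eu n)} {α : ℝ} {x y : Eu n} {d : ℝ}
    (h : d ∈ subLenSet Ω α x y) : dSub Ω α x y ≤ d :=
  csInf_le ⟨0, fun _ he => subLenSet_nonneg he⟩ h

theorem dSub_nonneg (Ω : Set (Eu n)) (α : ℝ) (x y : Eu n) : 0 ≤ dSub Ω α x y :=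
  Real.sInf_nonneg fun _ he => subLenSet_nonneg he

/-- Subhyperbolic lengths add under concatenation of curves. -/
theorem subLenSet_concat {Ω : Set (Eu n)} {α : ℝ} {x y z : Eu n} {d e : ℝ}
    (hd : d ∈ subLenSet Ω α x y) (he : e ∈ subLenSet Ω α y z) :
    d + e ∈ subLenSet Ω α x z := by
  obtain ⟨L, γ, hL, hlip, h0, h1, hΩ, hint, rfl⟩ := hd
  obtain ⟨M, δ, hM, hlip', h0', h1', hΩ', hint', rfl⟩ := he
  set η : ℝ → Eu n := fun s => if s ≤ L then γ s else δ (s - L) with hη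
  have ηl : ∀ s, s ≤ L → η s = γ s := fun s hs => if_pos hs
  have ηr : ∀ s, L ≤ s → η s = δ (s - L) := by
    intro s hs
    rcases hs.eq_or_lt with rfl | hs
    · simp [hη, h1, h0']
    · exact if_neg hs.not_ge
  have key : ∀ s ∈ Icc 0 (L + M), ∀ t ∈ Icc 0 (L + M), s ≤ t → dist (η s) (η t) ≤ t - s := by
    intro s hs t ht hst
    have ha : ∀ s ∈ Icc 0 L, ∀ t ∈ Icc 0 L, s ≤ t → dist (γ s) (γ t) ≤ t - s := by
      intro s hs t ht hst
      have := hlip.dist_le_mul s hs t ht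
      rwa [Real.dist_eq, abs_sub_comm, abs_of_nonneg (by linarith), NNReal.coe_one, one_mul] at this
    have hb : ∀ s ∈ Icc 0 M, ∀ t ∈ Icc 0 M, s ≤ t → dist (δ s) (δ t) ≤ t - s := by
      intro s hs t ht hst
      have := hlip'.dist_le_mul s hs t ht
      rwa [Real.dist_eq, abs_sub_comm, abs_of_nonneg (by linarith), NNReal.coe_one, one_mul] at this
    obtain ⟨hs0, hs1⟩ := hs
    obtain ⟨ht0, ht1⟩ := ht
    rcases le_total t L with htL | htL
    · rw [ηl s (hst.trans htL), ηl t htL]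
      exact ha s ⟨hs0, hst.trans htL⟩ t ⟨ht0, htL⟩ hst
    rcases le_total s L with hsL | hsL
    · rw [ηl s hsL, ηr t htL]
      have e1 := ha s ⟨hs0, hsL⟩ L ⟨hL, le_rfl⟩ hsL
      have e2 := hb 0 ⟨le_rfl, hM⟩ (t - L) ⟨by linarith, by linarith⟩ (by linarith)
      rw [h1] at e1
      rw [h0'] at e2
      linarith [dist_triangle (γ s) y (δ (t - L))]
    · rw [ηr s hsL, ηr t htL]
      have := hb (s - L) ⟨by linarith, by linarith⟩ (t - L) ⟨by linarith, by linarith⟩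
        (by linarith)
      linarith
  have hintl : EqOn (fun s => bdist Ω (γ s) ^ (α - 1)) (fun s => bdist Ω (η s) ^ (α - 1))
      (uIcc 0 L) := by
    intro s hs
    rw [uIcc_of_le hL] at hs
    simp only [ηl s hs.2]
  have hintr : EqOn (fun s => bdist Ω (δ (s - L)) ^ (α - 1)) (fun s => bdist Ω (η s) ^ (α - 1))
      (uIcc L (L + M)) := by
    intro s hs
    rw [uIcc_of_le (by linarith)] at hs
    simp only [ηr s hs.1]
  have I1 : IntervalIntegrable (fun s => bdist Ω (η s) ^ (α - 1)) volume 0 L :=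
    hint.congr (hintl.mono uIoc_subset_uIcc)
  have I2 : IntervalIntegrable (fun s => bdist Ω (η s) ^ (α - 1)) volume L (L + M) := by
    have := hint'.comp_sub_right L
    rw [zero_add, add_comm M L] at this
    exact this.congr (hintr.mono uIoc_subset_uIcc)
  refine ⟨L + M, η, by linarith, ?_, by rw [ηl 0 hL, h0], ?_, ?_, I1.trans I2, ?_⟩
  · refine LipschitzOnWith.of_dist_le_mul fun s hs t ht => ?_
    rw [NNReal.coe_one, one_mul, Real.dist_eq]
    rcases le_total s t with h | h
    · rw [abs_sub_comm, abs_of_nonneg (by linarith)]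
      exact key s hs t ht h
    · rw [dist_comm, abs_of_nonneg (by linarith)]
      exact key t ht s hs h
  · rw [ηr _ (by linarith), add_sub_cancel_left, h1']
  · intro s hs
    rcases le_total s L with h | h
    · rw [ηl s h]
      exact hΩ s ⟨hs.1, h⟩
    · rw [ηr s h]
      exact hΩ' _ ⟨by linarith, by linarith [hs.2]⟩
  · rw [← intervalIntegral.integral_add_adjacent_intervals I1 I2,
      ← intervalIntegral.integral_congr hintl, ← intervalIntegral.integral_congr hintr,
      intervalIntegral.integral_comp_sub_right (fun s => bdist Ω (δ s) ^ (α - 1)) L]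
    simp

theorem dSub_le_add {Ω : Set (Eu n)} {α : ℝ} {x y z : Eu n} {e : ℝ}
    (hne : (subLenSet Ω α x y).Nonempty) (he : e ∈ subLenSet Ω α y z) :
    dSub Ω α x z ≤ dSub Ω α x y + e := by
  rw [← sub_le_iff_le_add]
  refine le_csInf hne fun d hd => ?_
  linarith [dSub_le_of_mem (subLenSet_concat hd he)]

/-! ### Lengths of segments -/

/-- A segment on which `bdist Ω` is at least `m > 0` has subhyperbolic length at most
`m ^ (α - 1)` times its length. -/
theorem exists_segment_le {Ω : Set (Eu n)} {α : ℝ} (hα : α ≤ 1) {x y : Eu n} {m : ℝ} (hm : 0 < m)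
    (hΩ : ∀ z ∈ segment ℝ x y, z ∈ Ω ∧ m ≤ bdist Ω z) :
    ∃ d ∈ subLenSet Ω α x y, d ≤ m ^ (α - 1) * ‖y - x‖ := by
  -- If `x = y`, then `L = 0` and the quotient `s / 0 = 0` is harmless.
  set L := ‖y - x‖ with hL
  have hL0 : 0 ≤ L := norm_nonneg _
  set γ : ℝ → Eu n := fun s => x + (s / L) • (y - x) with hγ
  have hmem : ∀ s ∈ Icc 0 L, γ s ∈ segment ℝ x y := by
    intro s hs
    rw [segment_eq_image']
    exact ⟨s / L, ⟨div_nonneg hs.1 hL0, div_le_one_of_le₀ hs.2 hL0⟩, rfl⟩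
  have hlip : LipschitzWith 1 γ := by
    refine LipschitzWith.of_dist_le_mul fun s t => ?_
    rw [NNReal.coe_one, one_mul, Real.dist_eq, dist_eq_norm]
    have : γ s - γ t = ((s - t) / L) • (y - x) := by
      simp only [hγ]; rw [_root_.sub_div, sub_smul]; abel
    rw [this, norm_smul, ← hL, Real.norm_eq_abs, abs_div, abs_of_nonneg hL0]
    rcases hL0.eq_or_lt with h | h
    · rw [← h]; simp
    · rw [div_mul_cancel₀ _ h.ne']
  have hcont : ContinuousOn (fun s => bdist Ω (γ s) ^ (α - 1)) (uIcc 0 L) := by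
    rw [uIcc_of_le hL0]
    refine ContinuousOn.rpow_const ?_ fun s hs => Or.inl (hm.trans_le (hΩ _ (hmem s hs)).2).ne'
    exact ((Metric.continuous_infDist_pt _).comp hlip.continuous).continuousOn
  refine ⟨_, ⟨L, γ, hL0, hlip.lipschitzOnWith, by simp [hγ], ?_,
    fun s hs => (hΩ _ (hmem s hs)).1, hcont.intervalIntegrable, rfl⟩, ?_⟩
  · rcases hL0.eq_or_lt with h | h
    · have : y - x = 0 := norm_eq_zero.1 (hL.symm.trans h.symm)
      simp only [hγ, this, smul_zero, add_zero]
      exact (sub_eq_zero.1 this).symm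
    · simp [hγ, div_self h.ne']
  · have := intervalIntegral.integral_mono_on hL0 hcont.intervalIntegrable
      (intervalIntegrable_const (μ := volume) (c := m ^ (α - 1))) fun s hs =>
        Real.rpow_le_rpow_of_nonpos hm (hΩ _ (hmem s hs)).2 (by linarith)
    simpa [mul_comm] using this

/-- Along a unit-speed ray issuing from `a` on which `bdist Ω` equals the distance to `a`, the
subhyperbolic length between the parameters `p ≤ q` is `(q ^ α - p ^ α) / α`. -/
theorem radial_mem {Ω : Set (Eu n)} {α : ℝ} (hα : 0 < α) {a u : Eu n} (hu : ‖u‖ = 1) {p q : ℝ}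
    (hp : 0 < p) (hpq : p ≤ q)
    (hΩ : ∀ s ∈ Icc p q, a + s • u ∈ Ω ∧ bdist Ω (a + s • u) = s) :
    (q ^ α - p ^ α) / α ∈ subLenSet Ω α (a + q • u) (a + p • u) := by
  have hlip : LipschitzWith 1 (fun s : ℝ => a + (q - s) • u) := by
    refine LipschitzWith.of_dist_le_mul fun s t => ?_
    rw [dist_add_left, dist_eq_norm, ← sub_smul, norm_smul, hu, Real.dist_eq, Real.norm_eq_abs,
      NNReal.coe_one, abs_sub_comm s t]
    simp
  have hm : ∀ s ∈ Icc 0 (q - p), q - s ∈ Icc p q := fun s hs =>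
    ⟨by linarith [hs.2], by linarith [hs.1]⟩
  have heq : EqOn (fun s => bdist Ω (a + (q - s) • u) ^ (α - 1)) (fun s => (q - s) ^ (α - 1))
      (uIcc 0 (q - p)) := by
    intro s hs
    rw [uIcc_of_le (by linarith)] at hs
    simp only [(hΩ _ (hm s hs)).2]
  refine ⟨q - p, fun s => a + (q - s) • u, by linarith, hlip.lipschitzOnWith, by simp, by simp,
    fun s hs => (hΩ _ (hm s hs)).1, ?_, ?_⟩
  · refine (ContinuousOn.congr ?_ heq).intervalIntegrable
    refine ContinuousOn.rpow_const (by fun_prop) fun s hs => Or.inl ?_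
    rw [uIcc_of_le (by linarith)] at hs
    linarith [(hm s hs).1]
  · rw [intervalIntegral.integral_congr heq,
      intervalIntegral.integral_comp_sub_left (fun s => s ^ (α - 1)) q,
      integral_rpow (Or.inl (by linarith))]
    simp

/-! ### Nearest boundary points -/

/-- If `S` lies outside a ball and `a` is at most as far from the ball as any point of `S`, then the
same holds for the distances to the center: outside the ball, the two distances differ by `r`. -/
theorem nearest_center {S : Set (Eu n)} {x a : Eu n} {r : ℝ} (hr : 0 < r)
    (hfar : ∀ b ∈ S, r < dist x b)
    (hnear : ∀ b ∈ S, Metric.infDist a (cube x r) ≤ Metric.infDist b (cube x r)) :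
    ∀ b ∈ S, dist x a ≤ dist x b := by
  intro b hb
  have hne : (cube x r).Nonempty := ⟨x, Metric.mem_closedBall_self hr.le⟩
  have h1 : dist x a - r ≤ Metric.infDist a (cube x r) := by
    rw [Metric.le_infDist hne]
    intro z hz
    have hz' : dist z x ≤ r := hz
    linarith [dist_triangle x z a, dist_comm x z, dist_comm z a]
  have hpos : 0 < dist x b := hr.trans (hfar b hb)
  have h2 : Metric.infDist b (cube x r) ≤ dist x b - r := by
    -- The point of the ball nearest to `b` lies on the segment from `x` to `b`.
    have hz : x + (r / dist x b) • (b - x) ∈ cube x r := by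
      simp only [cube, Metric.mem_closedBall, dist_self_add_left, norm_smul]
      rw [← dist_eq_norm b x, dist_comm b x, Real.norm_of_nonneg (by positivity),
        div_mul_cancel₀ _ hpos.ne']
    refine (Metric.infDist_le_dist_of_mem hz).trans ?_
    have : b - (x + (r / dist x b) • (b - x)) = (1 - r / dist x b) • (b - x) := by
      rw [sub_smul, one_smul]; abel
    rw [dist_eq_norm, this, norm_smul, ← dist_eq_norm b x, dist_comm b x, Real.norm_of_nonneg,
      sub_mul, div_mul_cancel₀ _ hpos.ne', one_mul]
    rw [sub_nonneg, div_le_one hpos]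
    exact (hfar b hb).le
  linarith [hnear b hb]

theorem ball_bdist_subset {Ω : Set (Eu n)} (hΩ : IsOpen Ω) {x : Eu n} (hx : x ∈ Ω)
    (hpos : 0 < bdist Ω x) : Metric.ball x (bdist Ω x) ⊆ Ω := by
  refine IsPreconnected.subset_left_of_subset_union hΩ isClosed_closure.isOpen_compl
    (disjoint_compl_right.mono_left subset_closure) ?_ ⟨x, Metric.mem_ball_self hpos, hx⟩
    (convex_ball x (bdist Ω x)).isPreconnected
  intro w hw
  by_contra hcon
  rw [mem_union, mem_compl_iff, not_or, not_not] at hcon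
  have hwf : w ∈ frontier Ω := by
    rw [hΩ.frontier_eq]
    exact ⟨hcon.2, hcon.1⟩
  have h := Metric.infDist_le_dist_of_mem (x := x) hwf
  rw [Metric.mem_ball, dist_comm] at hw
  exact h.not_gt hw

/-! ### Convergence and the bound -/

/-- Lemma 4.4.  Let `Ω ⊆ ℝⁿ` be a domain and `α ∈ (0,1]`.  Let
`Q = Q(x_Q,r_Q)` be a cube in `Ω` with `diam Q ≤ dist(Q,∂Ω) ≤ 4·diam Q`, let `a_Q ∈ ∂Ω`
be a nearest point of `∂Ω` to `Q`, and set `x_i := a_Q + (1/i)(x_Q − a_Q)`.  Then for every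
`y ∈ Q` the limit `lim_i d̃_{α,Ω}(y,x_i)` exists and is at most `C(α)·dist(y,∂Ω)^α`. -/
theorem statement15 (α : ℝ) (hα : α ∈ Set.Ioc (0:ℝ) 1) :
    ∃ C : ℝ, 0 < C ∧
      ∀ (n : ℕ) (Ω : Set (Eu n)), IsOpen Ω → IsConnected Ω →
        ∀ (xQ : Eu n) (rQ : ℝ), 0 < rQ → cube xQ rQ ⊆ Ω →
          2 * rQ ≤ setDistS (cube xQ rQ) (frontier Ω) →
          setDistS (cube xQ rQ) (frontier Ω) ≤ 4 * (2 * rQ) →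
          ∀ aQ, aQ ∈ frontier Ω →
            (∀ b ∈ frontier Ω,
              Metric.infDist aQ (cube xQ rQ) ≤ Metric.infDist b (cube xQ rQ)) →
            ∀ y ∈ cube xQ rQ,
              ∃ l : ℝ,
                Tendsto (fun i : ℕ => dTil Ω α y (aQ + ((i:ℝ))⁻¹ • (xQ - aQ)))
                  atTop (nhds l) ∧
                l ≤ C * bdist Ω y ^ α := by
  obtain ⟨hα0, hα1⟩ := hα
  refine ⟨1 + 2 ^ α / α + 3 ^ α, by positivity, ?_⟩
  intro n Ω hΩ _ x r hr hQ hD _ a ha hnear y hy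
  have hxQ : x ∈ cube x r := Metric.mem_closedBall_self hr.le
  have hfar : ∀ z ∈ cube x r, ∀ b ∈ frontier Ω, 2 * r ≤ dist z b := fun z hz b hb =>
    hD.trans (csInf_le ⟨0, by rintro _ ⟨_, _, _, _, rfl⟩; exact dist_nonneg⟩ ⟨z, hz, b, hb, rfl⟩)
  have hbQ : ∀ z ∈ cube x r, 2 * r ≤ bdist Ω z := fun z hz =>
    (Metric.le_infDist ⟨a, ha⟩).2 fun b hb => hfar z hz b hb
  set R := dist x a with hRdef
  have hR : 0 < R := by linarith [hfar x hxQ a ha]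
  have hbx : bdist Ω x = R := le_antisymm (Metric.infDist_le_dist_of_mem ha)
    ((Metric.le_infDist ⟨a, ha⟩).2 fun b hb =>
      nearest_center hr (fun b hb => by linarith [hfar x hxQ b hb]) hnear b hb)
  set u : Eu n := R⁻¹ • (x - a) with hu_def
  have hu : ‖u‖ = 1 := by
    rw [hu_def, norm_smul, ← dist_eq_norm, ← hRdef, Real.norm_of_nonneg (by positivity),
      inv_mul_cancel₀ hR.ne']
  have hxu : ∀ t : ℝ, a + t • (x - a) = a + (t * R) • u := by
    intro t
    rw [hu_def, smul_smul, mul_assoc, mul_inv_cancel₀ hR.ne', mul_one]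
  have hx1 : a + R • u = x := by
    have := hxu 1
    rw [one_mul, one_smul] at this
    rw [← this]; abel
  have hray : ∀ s, 0 < s → s ≤ R → a + s • u ∈ Ω ∧ bdist Ω (a + s • u) = s := by
    intro s hs hsR
    have hd : dist x (a + s • u) = R - s := by
      rw [← hx1, dist_add_left, dist_eq_norm, ← sub_smul, norm_smul, hu, mul_one,
        Real.norm_of_nonneg (by linarith)]
    refine ⟨ball_bdist_subset hΩ (hQ hxQ) (hbx ▸ hR) ?_, le_antisymm ?_ ?_⟩
    · rw [Metric.mem_ball, dist_comm, hd, hbx]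
      linarith
    · refine (Metric.infDist_le_dist_of_mem ha).trans_eq ?_
      rw [dist_self_add_left, norm_smul, hu, mul_one, Real.norm_of_nonneg hs.le]
    · have h : bdist Ω x ≤ bdist Ω (a + s • u) + dist x (a + s • u) :=
        Metric.infDist_le_infDist_add_dist
      rw [hbx, hd] at h
      linarith
  have hrad : ∀ p q, 0 < p → p ≤ q → q ≤ R →
      (q ^ α - p ^ α) / α ∈ subLenSet Ω α (a + q • u) (a + p • u) := fun p q hp hpq hq =>
    radial_mem hα0 hu hp hpq fun s hs => hray s (hp.trans_le hs.1) (hs.2.trans hq)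
  obtain ⟨d, hd, hdle⟩ : ∃ d ∈ subLenSet Ω α y x, d ≤ (2 * r) ^ (α - 1) * ‖x - y‖ := by
    refine exists_segment_le hα1 (by positivity) fun z hz => ?_
    have hzQ := (convex_closedBall x r).segment_subset hy hxQ hz
    exact ⟨hQ hzQ, hbQ z hzQ⟩
  -- The sequence is shifted by one to avoid the index `0`, where `0⁻¹ = 0` gives `a` itself.
  set t : ℕ → ℝ := fun i => ((i + 1 : ℕ) : ℝ)⁻¹ * R with ht_def
  have ht0 : ∀ i, 0 < t i := fun i => by positivity
  have htanti : Antitone t := by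
    intro i j hij
    simp only [ht_def]
    gcongr
  have htR : ∀ i, t i ≤ R := fun i => by
    have := htanti (Nat.zero_le i)
    simpa [ht_def] using this
  have htlim : Tendsto t atTop (nhds 0) := by
    have h := (tendsto_inv_atTop_nhds_zero_nat (𝕜 := ℝ)).comp (tendsto_add_atTop_nat 1)
    simpa [ht_def, Function.comp_def] using h.mul_const R
  have hglim : Tendsto (fun i => t i ^ α / α) atTop (nhds 0) := by
    have h := (htlim.rpow_const (p := α) (Or.inr hα0.le)).div_const α
    rwa [Real.zero_rpow hα0.ne', zero_div] at h
  have hne : ∀ i, (subLenSet Ω α y (a + t i • u)).Nonempty := fun i => by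
    have h := hrad (t i) R (ht0 i) (htR i) le_rfl
    rw [hx1] at h
    exact ⟨_, subLenSet_concat hd h⟩
  have hanti : Antitone fun i => dSub Ω α y (a + t i • u) + t i ^ α / α := by
    intro i j hij
    have h := dSub_le_add (hne i) (hrad (t j) (t i) (ht0 j) (htanti hij) (htR i))
    rw [_root_.sub_div] at h
    simp only
    linarith
  have hbdd : BddBelow (range fun i => dSub Ω α y (a + t i • u) + t i ^ α / α) :=
    ⟨0, by
      rintro _ ⟨i, rfl⟩
      have := ht0 i
      exact add_nonneg (dSub_nonneg _ _ _ _) (by positivity)⟩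
  have hdlim := (tendsto_atTop_ciInf hanti hbdd).sub hglim
  simp only [add_sub_cancel_right] at hdlim
  have hnlim : Tendsto (fun i => ‖y - (a + t i • u)‖ ^ α) atTop
      (nhds (‖y - (a + (0 : ℝ) • u)‖ ^ α)) :=
    ((tendsto_const_nhds.sub (tendsto_const_nhds.add (htlim.smul_const u))).norm).rpow_const
      (Or.inr hα0.le)
  have hlim := hdlim.add hnlim
  refine ⟨_, (tendsto_add_atTop_iff_nat 1).1 (hlim.congr fun i => ?_), ?_⟩
  · rw [hxu, dTil]
  · refine le_of_tendsto' hlim fun i => ?_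
    set b := bdist Ω y with hb_def
    have hb : 2 * r ≤ b := hbQ y hy
    have hb0 : 0 < b := by linarith
    have hyx : dist y x ≤ r := hy
    have hRb : R ≤ b + dist x y := hbx ▸ Metric.infDist_le_infDist_add_dist
    rw [dist_comm] at hRb
    have h1 : d ≤ b ^ α := by
      calc d ≤ (2 * r) ^ (α - 1) * ‖x - y‖ := hdle
        _ ≤ (2 * r) ^ (α - 1) * (2 * r) := by
            gcongr
            rw [← dist_eq_norm, dist_comm]
            linarith
        _ = (2 * r) ^ α := by
            rw [← Real.rpow_add_one (by positivity), sub_add_cancel]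
        _ ≤ b ^ α := by gcongr
    have h2 : R ^ α / α ≤ 2 ^ α / α * b ^ α := by
      rw [div_mul_eq_mul_div, ← Real.mul_rpow (by norm_num) hb0.le]
      gcongr
      linarith
    have h3 : ‖y - (a + t i • u)‖ ^ α ≤ 3 ^ α * b ^ α := by
      rw [← Real.mul_rpow (by norm_num) hb0.le]
      gcongr
      have hxt : dist x (a + t i • u) = R - t i := by
        rw [← hx1, dist_add_left, dist_eq_norm, ← sub_smul, norm_smul, hu, mul_one,
          Real.norm_of_nonneg (by linarith [htR i])]
      rw [← dist_eq_norm]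
      linarith [dist_triangle y x (a + t i • u), ht0 i]
    have h4 : dSub Ω α y (a + t i • u) ≤ d + (R ^ α - t i ^ α) / α := by
      have h := hrad (t i) R (ht0 i) (htR i) le_rfl
      rw [hx1] at h
      exact dSub_le_of_mem (subLenSet_concat hd h)
    have h5 : 0 ≤ t i ^ α / α := by
      have := ht0 i
      positivity
    rw [_root_.sub_div] at h4
    linarith
end
end
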